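/- arXiv:2302.09647 — 2 statements merged into one kernel-verified Lean document; each statement's English description precedes it below -/
import Mathlib

section
/- Let S ≠ ℕ be a numerical semigroup with multiplicity m and Frobenius number F(S), let E ∈ I₀(S), and let f = F(S) mod m. Then E = K(S) if and only if w_i(E) + w_j(S) = w_f(S) = w_f(E) for all i, j ∈ {0, …, m−1} with i + j ≡ f (mod m). -/
/-!
Write `F` for the Frobenius number and `m` for the multiplicity. A set that is closed under adding
`m` and meets every residue class is
determined by its elements `w_i`: `x` belongs to it exactly when `w_x ≤ x`
(`mem_iff_wElt_le`). For `S` itself this gives `w_F(S) = F + m`, and, for `x + j ≡ F (mod m)`,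
it turns the condition defining the canonical ideal into an inequality (`mem_canonicalIdeal_iff`):
`x ∈ K(S) ↔ F + m ≤ x + w_j(S)`.
Since `F + m - w_j(S)` is itself congruent to `x`, this says `w_x(K(S)) = F + m - w_j(S)`.
So the identities `w_i(E) + w_j(S) = F + m` hold for `E = K(S)`, and conversely they force `E` to
have the same elements `w_i` as `K(S)`, hence to be equal to it.
-/

open Set Pointwise

/-- A numerical semigroup: a subset of ℕ containing 0, closed under addition,
with finite complement. -/
def IsNumSgp (S : Set ℕ) : Prop :=
  0 ∈ S ∧ (∀ a ∈ S, ∀ b ∈ S, a + b ∈ S) ∧ Sᶜ.Finite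

/-- The set of ideals of `S` whose smallest element is 0. -/
def I0 (S : Set ℕ) : Set (Set ℕ) :=
  {E | 0 ∈ E ∧ E + S ⊆ E}

/-- The genus of `S`: the number of gaps. -/
noncomputable def genus (S : Set ℕ) : ℕ := Sᶜ.ncard

/-- Pseudo-Frobenius numbers of `S`. -/
def PFset (S : Set ℕ) : Set ℕ :=
  {f | f ∉ S ∧ ∀ s ∈ S, s ≠ 0 → f + s ∈ S}

/-- The type of `S`. -/
noncomputable def typeNS (S : Set ℕ) : ℕ := (PFset S).ncard

/-- The multiplicity of `S`: its least nonzero element. -/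
noncomputable def mult (S : Set ℕ) : ℕ := sInf {n | n ∈ S ∧ n ≠ 0}

/-- `wElt E m i` is the least element of `E` congruent to `i` modulo `m`. -/
noncomputable def wElt (E : Set ℕ) (m i : ℕ) : ℕ := sInf {e | e ∈ E ∧ e % m = i % m}

/-- The Frobenius number of `S`: the largest gap. -/
noncomputable def FrobN (S : Set ℕ) : ℕ := sSup Sᶜ

/-- The standard canonical ideal of `S`:
`{x ∈ ℕ : x > F(S), or F(S) - x is a gap of S}`. -/
noncomputable def canonicalIdeal (S : Set ℕ) : Set ℕ :=
  {x | FrobN S < x ∨ FrobN S - x ∉ S}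

theorem wElt_le {E : Set ℕ} {m i e : ℕ} (he : e ∈ E) (h : e % m = i % m) : wElt E m i ≤ e :=
  Nat.sInf_le ⟨he, h⟩

theorem wElt_spec {E : Set ℕ} {m i : ℕ} (h : ∃ e ∈ E, e % m = i % m) :
    wElt E m i ∈ E ∧ wElt E m i % m = i % m :=
  Nat.sInf_mem (s := {e | e ∈ E ∧ e % m = i % m}) h

theorem mem_of_le {E : Set ℕ} {m e x : ℕ} (hE : ∀ e ∈ E, e + m ∈ E) (he : e ∈ E)
    (h : e % m = x % m) (hle : e ≤ x) : x ∈ E := by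
  obtain ⟨k, hk⟩ := (Nat.modEq_iff_dvd' hle).1 h
  have key : ∀ k, e + m * k ∈ E := by
    intro k
    induction k with
    | zero => simpa using he
    | succ k ih => simpa [Nat.mul_succ, add_assoc] using hE _ ih
  have hx : x = e + m * k := by omega
  exact hx ▸ key k

theorem mem_iff_wElt_le {E : Set ℕ} {m x : ℕ} (hE : ∀ e ∈ E, e + m ∈ E)
    (h : ∃ e ∈ E, e % m = x % m) : x ∈ E ↔ wElt E m x ≤ x :=
  ⟨fun hx => wElt_le hx rfl,
    fun hx => mem_of_le hE (wElt_spec h).1 (wElt_spec h).2 hx⟩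

theorem mem_of_FrobN_lt {S : Set ℕ} (hS : IsNumSgp S) {x : ℕ} (hx : FrobN S < x) : x ∈ S := by
  by_contra h
  exact absurd (le_csSup hS.2.2.bddAbove h) (not_le.2 hx)

theorem FrobN_notMem {S : Set ℕ} (hS : IsNumSgp S) (hne : S ≠ Set.univ) : FrobN S ∉ S :=
  Nat.sSup_mem (s := Sᶜ) (Set.nonempty_compl.2 hne) hS.2.2.bddAbove

theorem mult_spec {S : Set ℕ} (hS : IsNumSgp S) : mult S ∈ S ∧ mult S ≠ 0 :=
  Nat.sInf_mem (s := {n | n ∈ S ∧ n ≠ 0})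
    ⟨FrobN S + 1, mem_of_FrobN_lt hS (Nat.lt_succ_self _), Nat.succ_ne_zero _⟩

theorem exists_mem_mod {S : Set ℕ} (hS : IsNumSgp S) {m : ℕ} (hm : 0 < m) (i : ℕ) :
    ∃ e ∈ S, e % m = i % m := by
  refine ⟨i + m * (FrobN S + 1), mem_of_FrobN_lt hS ?_, by simp⟩
  nlinarith

/-- Two numbers in the same class modulo `m` that are strictly ordered differ by at least `m`. -/
theorem add_le_of_mod_eq {m a b : ℕ} (h : a % m = b % m) (hlt : a < b) : a + m ≤ b := by
  have := Nat.le_of_dvd (by omega) ((Nat.modEq_iff_dvd' hlt.le).1 h)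
  omega

theorem wElt_FrobN {S : Set ℕ} (hS : IsNumSgp S) (hne : S ≠ Set.univ) {m : ℕ} (hm : 0 < m)
    (hadd : ∀ e ∈ S, e + m ∈ S) : wElt S m (FrobN S) = FrobN S + m := by
  apply le_antisymm
  · exact wElt_le (mem_of_FrobN_lt hS (by omega)) (by simp)
  · have hsp := wElt_spec (exists_mem_mod hS hm (FrobN S))
    refine add_le_of_mod_eq hsp.2.symm (not_le.1 fun hle => FrobN_notMem hS hne ?_)
    exact mem_of_le hadd hsp.1 hsp.2 hle

theorem wElt_le_FrobN_add {S : Set ℕ} (hS : IsNumSgp S) {m : ℕ} (hm : 0 < m) (j : ℕ) :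
    wElt S m j ≤ FrobN S + m := by
  by_contra! h
  have hsp := wElt_spec (exists_mem_mod hS hm j)
  have := wElt_le (m := m) (i := j) (mem_of_FrobN_lt hS (x := wElt S m j - m) (by omega))
    (by rw [← Nat.mod_eq_sub_mod (by omega), hsp.2])
  omega

/-- Membership in the canonical ideal through the least elements of `S`: for `x ≤ F(S)` the number
`F(S) - x` lies in the class of `j`, so it is a gap exactly when it is less than `w_j(S)`; for
`x > F(S)` both sides hold, since `x + w_j(S) ≡ F(S)`. -/
theorem mem_canonicalIdeal_iff {S : Set ℕ} (hS : IsNumSgp S) {m : ℕ} (hm : 0 < m)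
    (hadd : ∀ e ∈ S, e + m ∈ S) {x j : ℕ} (h : (x + j) % m = FrobN S % m) :
    x ∈ canonicalIdeal S ↔ FrobN S + m ≤ x + wElt S m j := by
  have hsp := wElt_spec (exists_mem_mod hS hm j)
  have hc : FrobN S % m = (x + wElt S m j) % m := by
    rw [← h]; exact (Nat.ModEq.add_left x hsp.2).symm
  constructor
  · intro hx
    refine add_le_of_mod_eq hc (not_le.1 fun hle => ?_)
    rcases hx with hx | hx
    · omega
    · refine hx (mem_of_le hadd hsp.1 ?_ (by omega))
      have : x + wElt S m j ≡ x + (FrobN S - x) [MOD m] := by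
        rw [Nat.add_sub_cancel' (by omega)]; exact hc.symm
      exact Nat.ModEq.add_left_cancel' x this
  · intro hle
    by_contra hx
    simp only [canonicalIdeal, Set.mem_ofPred_eq, not_or, not_not, not_lt] at hx
    have : wElt S m j ≤ FrobN S - x := by
      refine wElt_le hx.2 ?_
      have : x + (FrobN S - x) ≡ x + j [MOD m] := by
        rw [Nat.add_sub_cancel' hx.1]; exact h.symm
      exact Nat.ModEq.add_left_cancel' x this
    omega

theorem wElt_canonicalIdeal {S : Set ℕ} (hS : IsNumSgp S) {m : ℕ} (hm : 0 < m)
    (hadd : ∀ e ∈ S, e + m ∈ S) {i j : ℕ} (h : (i + j) % m = FrobN S % m) :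
    wElt (canonicalIdeal S) m i + wElt S m j = FrobN S + m := by
  have hle := wElt_le_FrobN_add hS hm j
  have hsp := wElt_spec (exists_mem_mod hS hm j)
  -- `F + m - w_j(S)` is congruent to `i`
  have hc : (FrobN S + m - wElt S m j) % m = i % m := by
    have : (FrobN S + m - wElt S m j) + wElt S m j ≡ i + wElt S m j [MOD m] := by
      rw [Nat.sub_add_cancel hle]
      have h1 : i + wElt S m j ≡ i + j [MOD m] := Nat.ModEq.add_left i hsp.2
      have h2 : FrobN S + m ≡ FrobN S [MOD m] := by simp [Nat.ModEq]
      exact h2.trans (h1.trans h).symm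
    exact Nat.ModEq.add_right_cancel' _ this
  have hcls : ∀ y, y % m = i % m → (y + j) % m = FrobN S % m := fun y hy =>
    (Nat.ModEq.add_right j hy).trans h
  have hmem : FrobN S + m - wElt S m j ∈ canonicalIdeal S :=
    (mem_canonicalIdeal_iff hS hm hadd (hcls _ hc)).2 (by omega)
  have h1 := wElt_le hmem hc
  have hK := wElt_spec ⟨_, hmem, hc⟩
  have h2 := (mem_canonicalIdeal_iff hS hm hadd (hcls _ hK.2)).1 hK.1
  omega

theorem stmt_8 (S : Set ℕ) (hS : IsNumSgp S) (hne : S ≠ Set.univ)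
    (m : ℕ) (hm : m = mult S) (E : Set ℕ) (hE : E ∈ I0 S)
    (f : ℕ) (hf : f = FrobN S % m) :
    E = canonicalIdeal S ↔
      ∀ i < m, ∀ j < m, (i + j) % m = f →
        wElt E m i + wElt S m j = wElt S m f ∧ wElt S m f = wElt E m f := by
  obtain ⟨hmS, hm0⟩ := mult_spec hS
  rw [← hm] at hmS hm0
  have hm0 : 0 < m := Nat.pos_of_ne_zero hm0
  have haddS : ∀ e ∈ S, e + m ∈ S := fun e he => hS.2.1 e he m hmS
  have haddE : ∀ e ∈ E, e + m ∈ E := fun e he => hE.2 (Set.add_mem_add he hmS)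
  have hSE : S ⊆ E := fun s hs => by simpa using hE.2 (Set.add_mem_add hE.1 hs)
  have hwmod : ∀ (A : Set ℕ) (i : ℕ), wElt A m (i % m) = wElt A m i := by simp [wElt]
  have hwf : wElt S m f = FrobN S + m := by
    rw [hf, hwmod, wElt_FrobN hS hne hm0 haddS]
  constructor
  · intro hEK i _ j _ hij
    rw [hwf, hEK, wElt_canonicalIdeal hS hm0 haddS (hij.trans hf)]
    refine ⟨rfl, ?_⟩
    have h0 : wElt S m 0 = 0 := Nat.le_zero.1 (wElt_le hS.1 rfl)
    -- the class of `f` pairs with the class of `0`, where `w_0(S) = 0`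
    have := wElt_canonicalIdeal hS hm0 haddS (i := f) (j := 0) (by simp [hf])
    omega
  · intro H
    ext x
    -- `j` is the residue complementary to `x`, so that `x + j ≡ F (mod m)`
    obtain ⟨j, hjm, hj⟩ : ∃ j < m, (x + j) % m = FrobN S % m := by
      have hx := Nat.mod_lt x hm0
      refine ⟨(FrobN S + (m - x % m)) % m, Nat.mod_lt _ hm0, ?_⟩
      rw [Nat.add_mod_mod, ← Nat.mod_add_mod,
        show x % m + (FrobN S + (m - x % m)) = FrobN S + m by omega, Nat.add_mod_right]
    obtain ⟨e, heS, he⟩ := exists_mem_mod hS hm0 x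
    have hw := (H (x % m) (Nat.mod_lt _ hm0) j hjm (by rw [Nat.mod_add_mod, hj, hf])).1
    rw [hwmod, hwf] at hw
    rw [mem_iff_wElt_le haddE ⟨e, hSE heS, he⟩, mem_canonicalIdeal_iff hS hm0 haddS hj]
    omega
end

section
/- Let S ≠ ℕ be a numerical semigroup. Then S is symmetric if and only if I₀(S) has exactly one quark (namely {0, F(S)} + S). -/
/-!
If `f` is a pseudo-Frobenius number of `S`, then `{0, f} + S = S ∪ {f}` (`pair_add_eq`). Since a
summand of an ideal lies between `S` and that ideal, `S ∪ {f}` is a quark (`isQuark_insert`). The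
Frobenius number `F` is pseudo-Frobenius, so `S ∪ {F}` is always a quark.

If `S` is symmetric, every ideal `Q ≠ S` with minimum 0 contains a gap `x`, hence
`F = x + (F - x) ∈ Q`, and then `Q = (S ∪ {F}) + Q`; so a quark can only be `S ∪ {F}`.

If `S` is not symmetric, the largest gap `x` with `F - x ∉ S` is a pseudo-Frobenius number different
from `F` (`exists_other_PF`), so `S ∪ {x}` is a second quark.
-/

open Set Pointwise

/-- A quark of `I₀(S)`: a non-identity element `Q` such that there is no
`I ∈ I₀(S)` with `I ≠ S`, `I ≠ Q` and `Q = I + K` for some `K ∈ I₀(S)`. -/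
def IsQuark (S Q : Set ℕ) : Prop :=
  Q ∈ I0 S ∧ Q ≠ S ∧
    ¬ ∃ I ∈ I0 S, I ≠ S ∧ I ≠ Q ∧ ∃ K ∈ I0 S, Q = I + K

/-- `S` is symmetric: `F(S) - x ∈ S` for every gap `x` of `S`. -/
noncomputable def IsSymmNS (S : Set ℕ) : Prop :=
  ∀ x : ℕ, x ∉ S → FrobN S - x ∈ S

theorem le_FrobN {S : Set ℕ} (hS : IsNumSgp S) {x : ℕ} (hx : x ∉ S) : x ≤ FrobN S :=
  le_csSup hS.2.2.bddAbove hx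

theorem FrobN_add_mem {S : Set ℕ} (hS : IsNumSgp S) {n : ℕ} (hn : n ≠ 0) : FrobN S + n ∈ S := by
  by_contra h
  have := le_FrobN hS h
  omega

theorem FrobN_mem_PFset {S : Set ℕ} (hS : IsNumSgp S) (hne : S ≠ Set.univ) :
    FrobN S ∈ PFset S :=
  ⟨FrobN_notMem hS hne, fun _ _ hs => FrobN_add_mem hS hs⟩

theorem subset_of_mem_I0 {S E : Set ℕ} (hE : E ∈ I0 S) : S ⊆ E := fun s hs =>
  hE.2 (by simpa using Set.add_mem_add hE.1 hs)

theorem pair_add_eq {S : Set ℕ} (hS : IsNumSgp S) {f : ℕ} (hf : f ∈ PFset S) :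
    ({0, f} : Set ℕ) + S = insert f S := by
  ext n
  simp only [Set.mem_add, Set.mem_insert_iff, Set.mem_singleton_iff]
  constructor
  · rintro ⟨a, rfl | rfl, s, hs, rfl⟩
    · simp [hs]
    · by_cases h0 : s = 0
      · simp [h0]
      · exact Or.inr (hf.2 s hs h0)
  · rintro (rfl | hn)
    · exact ⟨n, Or.inr rfl, 0, hS.1, rfl⟩
    · exact ⟨0, Or.inl rfl, n, hn, zero_add n⟩

theorem isQuark_insert {S : Set ℕ} (hS : IsNumSgp S) {f : ℕ} (hf : f ∈ PFset S) :
    IsQuark S (insert f S) := by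
  refine ⟨⟨Set.mem_insert_of_mem _ hS.1, ?_⟩, fun h => hf.1 (h ▸ Set.mem_insert f S), ?_⟩
  · rw [← pair_add_eq hS hf, add_assoc]
    refine Set.add_subset_add_left ?_
    rintro _ ⟨a, ha, b, hb, rfl⟩
    exact hS.2.1 a ha b hb
  · rintro ⟨I, hI, hIS, hIQ, K, hK, hQ⟩
    have hSI := subset_of_mem_I0 hI
    have hle : I ⊆ insert f S := fun i hi => hQ ▸ by
      simpa using Set.add_mem_add hi hK.1
    by_cases hfI : f ∈ I
    · exact hIQ (hle.antisymm (Set.insert_subset hfI hSI))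
    · exact hIS (((Set.subset_insert_iff_of_notMem hfI).1 hle).antisymm hSI)

theorem exists_other_PF {S : Set ℕ} (hS : IsNumSgp S) (h : ¬ IsSymmNS S) :
    ∃ x ∈ PFset S, x ≠ FrobN S := by
  let T : Set ℕ := {x | x ∉ S ∧ FrobN S - x ∉ S}
  have hT : T.Nonempty := by
    unfold IsSymmNS at h
    push Not at h
    exact h
  have hTb : BddAbove T := ⟨FrobN S, fun x hx => le_FrobN hS hx.1⟩
  have hx : sSup T ∈ T := Nat.sSup_mem hT hTb
  refine ⟨sSup T, ⟨hx.1, fun s hs hs0 => ?_⟩, fun he => hx.2 ?_⟩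
  · by_contra hg
    have hle := le_FrobN hS hg
    -- By maximality `x + s` is not in `T`, so adding `s` to `F - (x + s) ∈ S` gives `F - x ∈ S`.
    have hmem : FrobN S - (sSup T + s) ∈ S := by
      by_contra hn
      have := le_csSup hTb (show sSup T + s ∈ T from ⟨hg, hn⟩)
      omega
    apply hx.2
    have := hS.2.1 _ hmem s hs
    rwa [show FrobN S - (sSup T + s) + s = FrobN S - sSup T by omega] at this
  · rw [he, Nat.sub_self]
    exact hS.1

theorem FrobN_mem_of_symm {S Q : Set ℕ} (hS : IsNumSgp S) (h : IsSymmNS S)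
    (hQ : Q ∈ I0 S) (hQS : Q ≠ S) : FrobN S ∈ Q := by
  obtain ⟨x, hxQ, hxS⟩ : ∃ x ∈ Q, x ∉ S := by
    by_contra! hn
    exact hQS (Set.Subset.antisymm hn (subset_of_mem_I0 hQ))
  have := hQ.2 (Set.add_mem_add hxQ (h x hxS))
  rwa [Nat.add_sub_cancel' (le_FrobN hS hxS)] at this

/-- Adding `S ∪ {F}` does not change an ideal that contains `F`. -/
theorem eq_insert_add {S Q : Set ℕ} (hS : IsNumSgp S) (hQ : Q ∈ I0 S) (hF : FrobN S ∈ Q) :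
    Q = insert (FrobN S) S + Q := by
  apply Set.Subset.antisymm
  · intro q hq
    simpa using Set.add_mem_add (Set.mem_insert_of_mem (FrobN S) hS.1) hq
  · rintro _ ⟨a, rfl | ha, q, hq, rfl⟩
    · by_cases h0 : q = 0
      · simpa [h0] using hF
      · exact subset_of_mem_I0 hQ (FrobN_add_mem hS h0)
    · exact hQ.2 ⟨q, hq, a, ha, add_comm q a⟩

theorem stmt_17 (S : Set ℕ) (hS : IsNumSgp S) (hne : S ≠ Set.univ) :
    IsSymmNS S ↔ {Q | IsQuark S Q} = {({0, FrobN S} : Set ℕ) + S} := by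
  have hF := FrobN_mem_PFset hS hne
  have hFQ := isQuark_insert hS hF
  rw [pair_add_eq hS hF]
  constructor
  · intro h
    refine Set.eq_singleton_iff_unique_mem.2 ⟨hFQ, fun Q hQ => ?_⟩
    by_contra hQF
    exact hQ.2.2 ⟨_, hFQ.1, hFQ.2.1, Ne.symm hQF, Q, hQ.1,
      eq_insert_add hS hQ.1 (FrobN_mem_of_symm hS h hQ.1 hQ.2.1)⟩
  · intro h
    by_contra hsymm
    obtain ⟨x, hx, hxF⟩ := exists_other_PF hS hsymm
    have hmem : insert x S ∈ {Q | IsQuark S Q} := isQuark_insert hS hx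
    rw [h, Set.mem_singleton_iff] at hmem
    have hx' : x ∈ insert (FrobN S) S := hmem ▸ Set.mem_insert x S
    exact hx'.elim hxF hx.1
end
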